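/- The Gaussian mechanism satisfies (ε, δ)-DP: for a query u with ℓ₂-global sensitivity Δ₂u, adding Gaussian noise N(0, σ²I) with σ = (Δ₂u/ε)·√(2 log(1.25/δ)) yields an (ε, δ)-differentially private mechanism, provided ε ∈ (0,1) and δ ∈ (0,1). -/

import Mathlib

open MeasureTheory ProbabilityTheory

/-!
Write `P`, `Q` for the output laws at two neighbouring databases, with means `a`, `b` and densities
`p`, `q`. The elementary inequality `1 - exp (-x) ≤ exp (l * x) / (1 + l)` for `l > 0`, applied to
`x = log (p / q) - ε`, gives the pointwise bound
`p ≤ exp ε * q + exp (-l * ε) / (1 + l) * p ^ (1 + l) * q ^ (-l)`.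
Completing the square, `p ^ (1 + l) * q ^ (-l)` is `exp (l * (1 + l) * ‖a - b‖² / (2 * σ²))` times
the density of the Gaussian with mean `a + l * (a - b)` and covariance `σ² I`, whose total mass
is `1`. Integrating over `S` therefore proves `P S ≤ exp ε * Q S + C`, where
`C = exp (l * (1 + l) * ‖a - b‖² / (2 * σ²) - l * ε) / (1 + l)`.

With `σ = Δ * c / ε`, `c² = 2 * log (1.25 / δ)` and `l = c² / ε`, the exponent is at most
`ε / 2 - c² / 2`, so `C ≤ exp (ε / 2) / (1 + l) * (δ / 1.25)`. This is at most `δ` because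
`exp (1 / 2) < 1.75` and `l ≥ c² ≥ 2 * log 1.25 ≥ 0.4`.
-/

/-- A product of nondegenerate real Gaussians has the product density with respect to Lebesgue
measure. -/
lemma pi_gaussianReal_eq_withDensity {k : ℕ} (a : Fin k → ℝ) {v : NNReal} (hv : v ≠ 0) :
    Measure.pi (fun i => gaussianReal (a i) v) =
      (volume : Measure (Fin k → ℝ)).withDensity
        (fun x => ENNReal.ofReal (∏ i, gaussianPDFReal (a i) v (x i))) := by
  refine Measure.pi_eq fun s hs => ?_
  rw [withDensity_apply _ (MeasurableSet.univ_pi hs), volume_pi, Measure.restrict_pi_pi,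
    ← ofReal_integral_eq_lintegral_ofReal, integral_fintype_prod_eq_prod,
    ENNReal.ofReal_prod_of_nonneg]
  · exact Finset.prod_congr rfl fun i _ => (gaussianReal_apply_eq_integral _ hv _).symm
  · exact fun i _ => integral_nonneg fun x => gaussianPDFReal_nonneg _ _ _
  · exact Integrable.fintype_prod fun i => (integrable_gaussianPDFReal _ _).restrict
  · exact .of_forall fun x => Finset.prod_nonneg fun i _ => gaussianPDFReal_nonneg _ _ _

lemma one_sub_exp_neg_le {l : ℝ} (hl : 0 < l) (x : ℝ) :
    1 - Real.exp (-x) ≤ Real.exp (l * x) / (1 + l) := by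
  rw [le_div_iff₀ (by linarith)]
  have h1 := Real.add_one_le_exp (l * x)
  have h2 := Real.add_one_le_exp (-x)
  have h3 := Real.exp_pos (-x)
  nlinarith

lemma prod_gaussianPDFReal {k : ℕ} (a x : Fin k → ℝ) (v : NNReal) :
    ∏ i, gaussianPDFReal (a i) v (x i) =
      (Real.sqrt (2 * Real.pi * v))⁻¹ ^ k * Real.exp (-(∑ i, (x i - a i) ^ 2) / (2 * v)) := by
  simp only [gaussianPDFReal]
  rw [Finset.prod_mul_distrib, ← Real.exp_sum]
  simp [← Finset.sum_neg_distrib, Finset.sum_div]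

/-- The pointwise bound `p ≤ exp ε * q + C * r` between the densities of `N(a, v I)`, `N(b, v I)`
and the tilted Gaussian `N(a + l (a - b), v I)`. -/
lemma prod_gaussianPDFReal_le {k : ℕ} (a b x : Fin k → ℝ) {v : NNReal} (hv : v ≠ 0) {l : ℝ}
    (hl : 0 < l) (ε : ℝ) :
    ∏ i, gaussianPDFReal (a i) v (x i) ≤
      Real.exp ε * ∏ i, gaussianPDFReal (b i) v (x i) +
      Real.exp (l * (1 + l) * (∑ i, (a i - b i) ^ 2) / (2 * v) - l * ε) / (1 + l) *
        ∏ i, gaussianPDFReal (a i + l * (a i - b i)) v (x i) := by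
  simp only [prod_gaussianPDFReal]
  have hv' : (v : ℝ) ≠ 0 := by exact_mod_cast hv
  set K := (Real.sqrt (2 * Real.pi * v))⁻¹ ^ k
  have hK : 0 ≤ K := by positivity
  set A := ∑ i, (x i - a i) ^ 2 with hA
  set B := ∑ i, (x i - b i) ^ 2 with hB
  set D := ∑ i, (a i - b i) ^ 2 with hD
  have hR : ∑ i, (x i - (a i + l * (a i - b i))) ^ 2 = (1 + l) * A - l * B + l * (1 + l) * D := by
    simp only [hA, hB, hD, Finset.mul_sum, ← Finset.sum_sub_distrib, ← Finset.sum_add_distrib]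
    exact Finset.sum_congr rfl fun i _ => by ring
  rw [hR]
  have key := mul_le_mul_of_nonneg_left (one_sub_exp_neg_le hl ((B - A) / (2 * v) - ε))
    (mul_nonneg hK (Real.exp_pos (-A / (2 * v))).le)
  have e1 : Real.exp (-A / (2 * v)) * Real.exp (-((B - A) / (2 * v) - ε)) =
      Real.exp ε * Real.exp (-B / (2 * v)) := by
    rw [← Real.exp_add, ← Real.exp_add]; congr 1; ring
  have e2 : Real.exp (-A / (2 * v)) * Real.exp (l * ((B - A) / (2 * v) - ε)) =
      Real.exp (l * (1 + l) * D / (2 * v) - l * ε) *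
        Real.exp (-((1 + l) * A - l * B + l * (1 + l) * D) / (2 * v)) := by
    rw [← Real.exp_add, ← Real.exp_add]; congr 1; ring
  linear_combination key + K * e1 + K / (1 + l) * e2

lemma pi_gaussianReal_apply_le {k : ℕ} (a b : Fin k → ℝ) {v : NNReal} (hv : v ≠ 0) {l : ℝ}
    (hl : 0 < l) (ε : ℝ) {S : Set (Fin k → ℝ)} (hS : MeasurableSet S) :
    Measure.pi (fun i => gaussianReal (a i) v) S ≤
      ENNReal.ofReal (Real.exp ε) * Measure.pi (fun i => gaussianReal (b i) v) S +
      ENNReal.ofReal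
        (Real.exp (l * (1 + l) * (∑ i, (a i - b i) ^ 2) / (2 * v) - l * ε) / (1 + l)) := by
  set C := Real.exp (l * (1 + l) * (∑ i, (a i - b i) ^ 2) / (2 * v) - l * ε) / (1 + l) with hC
  have hC0 : 0 ≤ C := by positivity
  have meas (m : Fin k → ℝ) :
      Measurable fun x : Fin k → ℝ => ENNReal.ofReal (∏ i, gaussianPDFReal (m i) v (x i)) :=
    (Finset.measurable_prod _ fun i _ =>
      (measurable_gaussianPDFReal _ _).comp (measurable_pi_apply i)).ennreal_ofReal
  have nn (m x : Fin k → ℝ) : 0 ≤ ∏ i, gaussianPDFReal (m i) v (x i) :=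
    Finset.prod_nonneg fun i _ => gaussianPDFReal_nonneg _ _ _
  calc Measure.pi (fun i => gaussianReal (a i) v) S
      ≤ ENNReal.ofReal (Real.exp ε) * Measure.pi (fun i => gaussianReal (b i) v) S +
        ENNReal.ofReal C * Measure.pi (fun i => gaussianReal (a i + l * (a i - b i)) v) S := by
        have hr := pi_gaussianReal_eq_withDensity (fun i => a i + l * (a i - b i)) hv
        rw [hr, pi_gaussianReal_eq_withDensity a hv, pi_gaussianReal_eq_withDensity b hv]
        simp only [withDensity_apply _ hS]
        rw [← lintegral_const_mul _ (meas _),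
          ← lintegral_const_mul _ (meas fun i => a i + l * (a i - b i)),
          ← lintegral_add_left ((meas _).const_mul _)]
        refine lintegral_mono fun x => ?_
        rw [← ENNReal.ofReal_mul (Real.exp_pos _).le, ← ENNReal.ofReal_mul hC0,
          ← ENNReal.ofReal_add (mul_nonneg (Real.exp_pos _).le (nn _ _))
            (mul_nonneg hC0 (nn (fun i => a i + l * (a i - b i)) x))]
        exact ENNReal.ofReal_le_ofReal (prod_gaussianPDFReal_le a b x hv hl ε)
    _ ≤ _ := by
        gcongr
        exact mul_le_of_le_one_right' prob_le_one

/-- The choice `l = c² / ε`, where `L = c² = 2 log (1.25 / δ)` and `D` bounds the squared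
distance of the means, makes the additive error at most `δ`. -/
lemma additive_error_le {Δ ε δ L D : ℝ} (hΔ : 0 < Δ) (hε0 : 0 < ε) (hε1 : ε < 1) (hδ0 : 0 < δ)
    (hδ1 : δ < 1) (hL : L = 2 * Real.log (1.25 / δ)) (hL0 : 0 < L) (hD : D ≤ Δ ^ 2) :
    Real.exp (L / ε * (1 + L / ε) * D / (2 * ((Δ / ε) ^ 2 * L)) - L / ε * ε) / (1 + L / ε) ≤
      δ := by
  have hexp : L / ε * (1 + L / ε) * D / (2 * ((Δ / ε) ^ 2 * L)) - L / ε * ε ≤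
      ε / 2 - L / 2 := by
    calc _ ≤ L / ε * (1 + L / ε) * Δ ^ 2 / (2 * ((Δ / ε) ^ 2 * L)) - L / ε * ε := by gcongr
      _ = _ := by field_simp; ring
  have hLδ : Real.exp (-(L / 2)) = δ / 1.25 := by
    rw [hL, mul_div_cancel_left₀ _ two_ne_zero, Real.exp_neg, Real.exp_log (by positivity),
      inv_div]
  have hlog : 0.4 ≤ L := by
    have h1 := Real.one_sub_inv_le_log_of_pos (x := 1.25 / δ) (by positivity)
    rw [inv_div, show δ / 1.25 = 0.8 * δ by ring] at h1
    linarith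
  have hl : 0.4 ≤ L / ε := by rw [le_div_iff₀ hε0]; linarith
  have hhalf : Real.exp (ε / 2) ≤ 1.75 := by
    have h1 : Real.exp (ε / 2) ^ 2 ≤ 1.75 ^ 2 := by
      rw [← Real.exp_nat_mul]
      have h2 : Real.exp ((2 : ℕ) * (ε / 2)) ≤ Real.exp 1 := Real.exp_le_exp.2 (by
        push_cast; linarith)
      linarith [Real.exp_one_lt_d9]
    exact le_of_sq_le_sq h1 (by norm_num)
  rw [div_le_iff₀ (by linarith)]
  calc _ ≤ Real.exp (ε / 2 - L / 2) := Real.exp_le_exp.2 hexp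
    _ = Real.exp (ε / 2) * (δ / 1.25) := by rw [sub_eq_add_neg, Real.exp_add, hLδ]
    _ ≤ 1.75 * (δ / 1.25) := by gcongr
    _ = δ * 1.4 := by ring
    _ ≤ δ * (1 + L / ε) := by gcongr; linarith

/-- The Gaussian mechanism satisfies (ε, δ)-DP: for a query `u : DB → ℝᵏ` with ℓ₂-sensitivity
at most `Δ`, adding independent Gaussian noise of variance `σ²` per coordinate, with
`σ = (Δ/ε)·√(2 log(1.25/δ))`, yields an (ε, δ)-DP mechanism, for ε, δ ∈ (0,1). -/
theorem gaussian_mechanism_dp {DB : Type*} {k : ℕ} (neighbor : DB → DB → Prop)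
    (u : DB → Fin k → ℝ) (Δ ε δ : ℝ) (hΔ : 0 < Δ)
    (hε : ε ∈ Set.Ioo (0 : ℝ) 1) (hδ : δ ∈ Set.Ioo (0 : ℝ) 1)
    (hsens : ∀ X X', neighbor X X' →
      Real.sqrt (∑ i, (u X i - u X' i) ^ 2) ≤ Δ) :
    ∀ X X', neighbor X X' → ∀ S : Set (Fin k → ℝ), MeasurableSet S →
      (Measure.pi (fun i => gaussianReal (u X i)
          (Real.toNNReal ((Δ / ε * Real.sqrt (2 * Real.log (1.25 / δ))) ^ 2)))) S ≤
        ENNReal.ofReal (Real.exp ε) *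
          (Measure.pi (fun i => gaussianReal (u X' i)
            (Real.toNNReal ((Δ / ε * Real.sqrt (2 * Real.log (1.25 / δ))) ^ 2)))) S
          + ENNReal.ofReal δ := by
  obtain ⟨hε0, hε1⟩ := hε
  obtain ⟨hδ0, hδ1⟩ := hδ
  intro X X' hX S hS
  have hlog : 0 < Real.log (1.25 / δ) :=
    Real.log_pos (by rw [lt_div_iff₀ hδ0]; linarith)
  obtain ⟨L, hL⟩ : ∃ L, L = 2 * Real.log (1.25 / δ) := ⟨_, rfl⟩
  have hL0 : 0 < L := by rw [hL]; positivity
  have hvar : (Δ / ε * Real.sqrt (2 * Real.log (1.25 / δ))) ^ 2 = (Δ / ε) ^ 2 * L := by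
    rw [← hL, mul_pow, Real.sq_sqrt hL0.le]
  have hpos : 0 < (Δ / ε) ^ 2 * L := by positivity
  rw [hvar]
  refine (pi_gaussianReal_apply_le (u X) (u X') (Real.toNNReal_pos.2 hpos).ne'
    (l := L / ε) (by positivity) ε hS).trans ?_
  gcongr
  rw [Real.coe_toNNReal _ hpos.le]
  exact additive_error_le hΔ hε0 hε1 hδ0 hδ1 hL hL0 ((Real.sqrt_le_left hΔ.le).1 (hsens X X' hX))
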